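/- arXiv:0803.1339 — 2 statements merged into one kernel-verified Lean document; each statement's English description precedes it below -/
import Mathlib

section
/- For every g ∈ GL_n(ℂ) and every u ∈ ℂ, the Pfaffian Pf(Φ̃(u)) ∈ End(P) is GL_n-invariant: π(g) ∘ Pf(Φ̃(u)) ∘ π(g)⁻¹ = Pf(Φ̃(u)). -/
open Matrix MvPolynomial

noncomputable section

/-- Index set for entries `x_{i,j}` with `i < j`. -/
abbrev Idx (n : ℕ) := {p : Fin n × Fin n // p.1 < p.2}

/-- Polynomial algebra on the space of alternating `n × n` matrices. -/
abbrev P (n : ℕ) := MvPolynomial (Idx n) ℂ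

/-- Multiplication operator `M_{i,j}` (with `M_{j,i} = -M_{i,j}`, `M_{i,i} = 0`). -/
def Mop (n : ℕ) (i j : Fin n) : Module.End ℂ (P n) :=
  if h : i < j then LinearMap.mulLeft ℂ (X ⟨(i, j), h⟩)
  else if h' : j < i then -LinearMap.mulLeft ℂ (X ⟨(j, i), h'⟩ : P n)
  else 0

/-- Derivation `D_{i,j} = ∂/∂x_{i,j}` (with `D_{j,i} = -D_{i,j}`, `D_{i,i} = 0`). -/
def Dop (n : ℕ) (i j : Fin n) : Module.End ℂ (P n) :=
  if h : i < j then ((pderiv ⟨(i, j), h⟩ : Derivation ℂ (P n) (P n)) : P n →ₗ[ℂ] P n)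
  else if h' : j < i then -((pderiv ⟨(j, i), h'⟩ : Derivation ℂ (P n) (P n)) : P n →ₗ[ℂ] P n)
  else 0

/-- The generic alternating matrix with entries in `P n`. -/
def genMat (n : ℕ) : Matrix (Fin n) (Fin n) (P n) := Matrix.of fun i j =>
  if h : i < j then X ⟨(i, j), h⟩
  else if h' : j < i then -X ⟨(j, i), h'⟩
  else 0

/-- The representation `π(g)` of `GL n ℂ` on `P n`, sending `x_{i,j}` to the
`(i,j)`-entry of `g⁻¹ x ᵗ(g⁻¹)`. -/
def piHom (n : ℕ) (g : GL (Fin n) ℂ) : P n →ₐ[ℂ] P n :=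
  aeval fun v : Idx n =>
    ((((g⁻¹ : GL (Fin n) ℂ) : Matrix (Fin n) (Fin n) ℂ).map (algebraMap ℂ (P n)) * genMat n *
      (((g⁻¹ : GL (Fin n) ℂ) : Matrix (Fin n) (Fin n) ℂ).map (algebraMap ℂ (P n)))ᵀ))
      v.1.1 v.1.2

/-- Pfaffian of a `2m × 2m` matrix with (possibly noncommuting) entries in a `ℂ`-algebra. -/
def Pf {A : Type*} [Ring A] [Algebra ℂ A] {m : ℕ} (B : Matrix (Fin (2 * m)) (Fin (2 * m)) A) :
    A :=
  (((2 : ℂ) ^ m * m.factorial)⁻¹) • ∑ σ : Equiv.Perm (Fin (2 * m)),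
    (Equiv.Perm.sign σ : ℤ) •
      (List.ofFn (fun i : Fin m =>
        B (σ ⟨2 * (i : ℕ), by have := i.isLt; omega⟩)
          (σ ⟨2 * (i : ℕ) + 1, by have := i.isLt; omega⟩))).prod

/-- The matrix `J_n` with 1's on the anti-diagonal. -/
def Jmat (A : Type*) [Zero A] [One A] (n : ℕ) : Matrix (Fin n) (Fin n) A :=
  Matrix.of fun i j => if (i : ℕ) + (j : ℕ) = n - 1 then 1 else 0

/-- Reindexing `Fin n ⊕ Fin n ≃ Fin (2*n)`. -/
def sumEquiv (n : ℕ) : (Fin n ⊕ Fin n) ≃ Fin (2 * n) :=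
  finSumFinEquiv.trans (finCongr (two_mul n).symm)

/-- The alternating matrix `Φ̃(u) = [[M, u·J_n], [−u·J_n, −J_n D J_n]]` over `End(P)`. -/
def PhiTilde (n : ℕ) (u : ℂ) : Matrix (Fin (2 * n)) (Fin (2 * n)) (Module.End ℂ (P n)) :=
  Matrix.reindex (sumEquiv n) (sumEquiv n)
    (Matrix.fromBlocks (Matrix.of fun i j => Mop n i j) (u • Jmat (Module.End ℂ (P n)) n)
      (-(u • Jmat (Module.End ℂ (P n)) n))
      (-(Jmat (Module.End ℂ (P n)) n * (Matrix.of fun i j => Dop n i j) *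
          Jmat (Module.End ℂ (P n)) n)))

/-! ### Pfaffians and congruence by scalar matrices -/

def ev {m : ℕ} (i : Fin m) : Fin (2 * m) := ⟨2 * (i : ℕ), by have := i.isLt; omega⟩
def od {m : ℕ} (i : Fin m) : Fin (2 * m) := ⟨2 * (i : ℕ) + 1, by have := i.isLt; omega⟩

def pairEquiv (m : ℕ) : Fin m × Fin 2 ≃ Fin (2 * m) :=
  finProdFinEquiv.trans (finCongr (mul_comm m 2))

lemma pairEquiv_zero {m : ℕ} (i : Fin m) : pairEquiv m (i, 0) = ev i := by
  ext; simp [pairEquiv, ev]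

lemma pairEquiv_one {m : ℕ} (i : Fin m) : pairEquiv m (i, 1) = od i := by
  ext; simp [pairEquiv, od, add_comm]

lemma prod_pairs {m : ℕ} {R : Type*} [CommMonoid R] (F : Fin (2 * m) → R) :
    ∏ i, F (ev i) * F (od i) = ∏ k, F k := by
  rw [← (pairEquiv m).prod_comp, Fintype.prod_prod_type]
  refine Finset.prod_congr rfl fun i _ => ?_
  rw [Fin.prod_univ_two, pairEquiv_zero, pairEquiv_one]

def funPairEquiv (m : ℕ) (K : Type*) : (Fin (2 * m) → K) ≃ (Fin m → K × K) :=
  ((Equiv.arrowCongr (pairEquiv m).symm (Equiv.refl K)).trans (Equiv.curry _ _ _)).trans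
    (Equiv.piCongrRight fun _ => finTwoArrowEquiv K)

lemma funPairEquiv_apply {m : ℕ} {K : Type*} (f : Fin (2 * m) → K) (i : Fin m) :
    funPairEquiv m K f i = (f (ev i), f (od i)) := by
  simp [funPairEquiv, finTwoArrowEquiv, ← pairEquiv_zero, ← pairEquiv_one]

lemma expand_prod {A : Type*} [Ring A] [Algebra ℂ A] {m : ℕ}
    (B : Matrix (Fin (2 * m)) (Fin (2 * m)) A) (h : Matrix (Fin (2 * m)) (Fin (2 * m)) ℂ)
    (σ : Fin (2 * m) → Fin (2 * m)) :
    (List.ofFn fun i : Fin m => ∑ p : Fin (2 * m) × Fin (2 * m),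
        (h (σ (ev i)) p.1 * h (σ (od i)) p.2) • B p.1 p.2).prod =
      ∑ f : Fin (2 * m) → Fin (2 * m), (∏ k, h (σ k) (f k)) •
        (List.ofFn fun i : Fin m => B (f (ev i)) (f (od i))).prod := by
  rw [← MultilinearMap.mkPiAlgebraFin_apply (R := ℂ), MultilinearMap.map_sum,
    ← (funPairEquiv m (Fin (2 * m))).sum_comp]
  refine Finset.sum_congr rfl fun f _ => ?_
  rw [MultilinearMap.map_smul_univ, MultilinearMap.mkPiAlgebraFin_apply]
  simp only [funPairEquiv_apply]
  rw [prod_pairs (fun k => h (σ k) (f k))]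

lemma Pf_congr {A : Type*} [Ring A] [Algebra ℂ A] {m : ℕ}
    (B C : Matrix (Fin (2 * m)) (Fin (2 * m)) A) (h : Matrix (Fin (2 * m)) (Fin (2 * m)) ℂ)
    (hC : ∀ a b, C a b = ∑ p : Fin (2 * m) × Fin (2 * m), (h a p.1 * h b p.2) • B p.1 p.2) :
    Pf C = h.det • Pf B := by
  have key : ∀ f : Fin (2 * m) → Fin (2 * m),
      ∑ σ : Equiv.Perm (Fin (2 * m)), ((Equiv.Perm.sign σ : ℤ) : ℂ) * ∏ k, h (σ k) (f k) =
        (h.submatrix id f).det := by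
    intro f
    rw [det_apply']
    simp
  unfold Pf
  rw [smul_comm h.det]
  congr 1
  change ∑ σ : Equiv.Perm (Fin (2 * m)), (Equiv.Perm.sign σ : ℤ) •
      (List.ofFn (fun i : Fin m => C (σ (ev i)) (σ (od i)))).prod =
    h.det • ∑ σ : Equiv.Perm (Fin (2 * m)), (Equiv.Perm.sign σ : ℤ) •
      (List.ofFn (fun i : Fin m => B (σ (ev i)) (σ (od i)))).prod
  simp only [hC]
  simp only [fun σ : Equiv.Perm (Fin (2 * m)) => expand_prod B h (fun k => σ k)]
  simp only [Finset.smul_sum]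
  rw [Finset.sum_comm]
  have h1 : ∀ f : Fin (2 * m) → Fin (2 * m),
      ∑ σ : Equiv.Perm (Fin (2 * m)), (Equiv.Perm.sign σ : ℤ) • (∏ k, h (σ k) (f k)) •
        (List.ofFn fun i : Fin m => B (f (ev i)) (f (od i))).prod =
      (h.submatrix id f).det • (List.ofFn fun i : Fin m => B (f (ev i)) (f (od i))).prod := by
    intro f
    rw [← key, Finset.sum_smul]
    refine Finset.sum_congr rfl fun σ _ => ?_
    rw [mul_smul, Int.cast_smul_eq_zsmul]
  rw [Finset.sum_congr rfl fun f _ => h1 f]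
  symm
  refine Finset.sum_of_injOn (fun σ : Equiv.Perm (Fin (2 * m)) => (σ : Fin (2 * m) → Fin (2 * m)))
    (fun σ _ τ _ hh => DFunLike.coe_injective hh) (fun _ _ => Finset.mem_coe.2 (Finset.mem_univ _)) ?_ ?_
  · intro f _ hf
    have hni : ¬ Function.Injective f := by
      intro hi
      exact hf ⟨Equiv.ofBijective f (Finite.injective_iff_bijective.1 hi), by simp, by ext; simp⟩
    simp only [Function.Injective, not_forall] at hni
    obtain ⟨a, b, hab, hne⟩ := hni
    rw [det_zero_of_column_eq hne (by intro k; simp [hab]), zero_smul]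
  · intro σ _
    rw [det_permute', mul_comm (_ : ℂ) h.det, mul_smul, Int.cast_smul_eq_zsmul]

/-! ### The action on generators -/

lemma genMat_antisymm (n : ℕ) : (genMat n)ᵀ = - genMat n := by
  ext1 i j
  simp only [transpose_apply, Matrix.neg_apply, genMat, of_apply]
  rcases lt_trichotomy i j with h | h | h
  · simp [h, h.not_gt]
  · subst h; simp
  · simp [h, h.not_gt]

lemma genMat_lt {n : ℕ} (v : Idx n) : genMat n v.1.1 v.1.2 = X v := by
  simp [genMat, v.2]

lemma ext_antisymm {n : ℕ} {A : Type*} [AddCommGroup A] [Module ℂ A]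
    (B C : Matrix (Fin n) (Fin n) A) (hB : Bᵀ = -B) (hC : Cᵀ = -C)
    (h : ∀ i j, i < j → B i j = C i j) : B = C := by
  have hd : ∀ B : Matrix (Fin n) (Fin n) A, Bᵀ = -B → ∀ i, B i i = 0 := by
    intro B hB i
    have := congrFun (congrFun hB i) i
    simp only [transpose_apply, Matrix.neg_apply] at this
    have h2 : (2 : ℂ) • B i i = 0 := by rw [two_smul]; nth_rewrite 1 [this]; simp
    simpa using h2
  ext i j
  rcases lt_trichotomy i j with h' | h' | h'
  · exact h i j h'
  · subst h'; rw [hd B hB, hd C hC]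
  · have h1 := congrFun (congrFun hB j) i
    have h2 := congrFun (congrFun hC j) i
    simp only [transpose_apply, Matrix.neg_apply] at h1 h2
    rw [h1, h2, h j i h']

abbrev cst (n : ℕ) (A : Type*) [Ring A] [Algebra ℂ A] :
    Matrix (Fin n) (Fin n) ℂ →+* Matrix (Fin n) (Fin n) A := (algebraMap ℂ A).mapMatrix

lemma piHom_genMat (n : ℕ) (g : GL (Fin n) ℂ) :
    (genMat n).map (piHom n g) =
      cst n (P n) (g⁻¹ : GL (Fin n) ℂ) * genMat n * (cst n (P n) (g⁻¹ : GL (Fin n) ℂ))ᵀ := by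
  apply ext_antisymm
  · rw [← transpose_map, genMat_antisymm]; ext1; simp
  · simp [transpose_mul, genMat_antisymm, Matrix.mul_assoc]
  · intro i j h
    have := genMat_lt (⟨(i, j), h⟩ : Idx n)
    simp only at this
    rw [map_apply, this, piHom, aeval_X]
    rfl

lemma piHom_comp (n : ℕ) (g : GL (Fin n) ℂ) :
    (piHom n g).comp (piHom n g⁻¹) = AlgHom.id ℂ (P n) := by
  apply MvPolynomial.algHom_ext
  intro v
  have h1 : (genMat n).map (fun x => piHom n g (piHom n g⁻¹ x)) = genMat n := by
    have : (genMat n).map (fun x => piHom n g (piHom n g⁻¹ x)) =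
        (piHom n g : P n →+* P n).mapMatrix ((genMat n).map (piHom n g⁻¹)) := by
      ext1; simp
    rw [this, piHom_genMat, map_mul, map_mul]
    have e1 : ∀ a : Matrix (Fin n) (Fin n) ℂ,
        (piHom n g : P n →+* P n).mapMatrix (cst n (P n) a) = cst n (P n) a := by
      intro a; ext1; simp
    have e2 : ∀ a : Matrix (Fin n) (Fin n) ℂ, (cst n (P n) a)ᵀ = cst n (P n) aᵀ := by
      intro a; ext1; simp
    have e3 : (piHom n g : P n →+* P n).mapMatrix (genMat n) = (genMat n).map (piHom n g) := rfl
    rw [e2, e1, e1, e3, piHom_genMat, e2]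
    simp only [← mul_assoc, ← map_mul]
    simp only [mul_assoc, ← map_mul, ← transpose_mul]
    have : ((g⁻¹⁻¹ : GL (Fin n) ℂ) : Matrix (Fin n) (Fin n) ℂ) * (g⁻¹ : GL (Fin n) ℂ) = 1 := by
      rw [← Units.val_mul]; simp
    rw [this, transpose_one, map_one, mul_one, one_mul]
  have := congrFun (congrFun h1 v.1.1) v.1.2
  simp only [map_apply, genMat_lt] at this
  simpa using this

def piEquiv (n : ℕ) (g : GL (Fin n) ℂ) : P n ≃ₐ[ℂ] P n :=
  AlgEquiv.ofAlgHom (piHom n g) (piHom n g⁻¹) (piHom_comp n g)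
    (by simpa using piHom_comp n g⁻¹)

def conj (n : ℕ) (g : GL (Fin n) ℂ) : Module.End ℂ (P n) ≃ₐ[ℂ] Module.End ℂ (P n) :=
  (piEquiv n g).toLinearEquiv.conjAlgEquiv ℂ

lemma conj_apply (n : ℕ) (g : GL (Fin n) ℂ) (T : Module.End ℂ (P n)) :
    conj n g T = (piHom n g).toLinearMap ∘ₗ T ∘ₗ (piHom n g⁻¹).toLinearMap := rfl

lemma piHom_piHom_inv (n : ℕ) (g : GL (Fin n) ℂ) (p : P n) :
    piHom n g (piHom n g⁻¹ p) = p := AlgHom.congr_fun (piHom_comp n g) p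

/-! ### The multiplication operators -/

abbrev Mmat (n : ℕ) : Matrix (Fin n) (Fin n) (Module.End ℂ (P n)) := Matrix.of fun i j => Mop n i j
abbrev Dmat (n : ℕ) : Matrix (Fin n) (Fin n) (Module.End ℂ (P n)) := Matrix.of fun i j => Dop n i j

lemma Mop_eq (n : ℕ) (i j : Fin n) : Mop n i j = Algebra.lmul ℂ (P n) (genMat n i j) := by
  unfold Mop genMat
  simp only [of_apply]
  split_ifs <;> refine LinearMap.ext fun p => ?_ <;> simp

lemma cst_mul_apply {n : ℕ} {A : Type*} [Ring A] [Algebra ℂ A] (a b : Matrix (Fin n) (Fin n) ℂ)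
    (B : Matrix (Fin n) (Fin n) A) (i j : Fin n) :
    (cst n A a * B * cst n A b) i j = ∑ k, ∑ l, (a i k * b l j) • B k l := by
  simp only [mul_apply, Finset.sum_mul]
  rw [Finset.sum_comm]
  refine Finset.sum_congr rfl fun k _ => Finset.sum_congr rfl fun l _ => ?_
  simp only [RingHom.mapMatrix_apply, map_apply]
  rw [← Algebra.commutes, ← mul_assoc, ← map_mul, ← Algebra.smul_def, mul_comm]

lemma cst_transpose {n : ℕ} {A : Type*} [Ring A] [Algebra ℂ A] (a : Matrix (Fin n) (Fin n) ℂ) :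
    (cst n A a)ᵀ = cst n A aᵀ := by
  ext1; simp

lemma conj_M (n : ℕ) (g : GL (Fin n) ℂ) : (Mmat n).map (conj n g) =
    cst n _ (g⁻¹ : GL (Fin n) ℂ) * Mmat n * cst n _ ((g⁻¹ : GL (Fin n) ℂ) : Matrix _ _ ℂ)ᵀ := by
  ext1 i j
  rw [cst_mul_apply]
  have h := congrFun (congrFun (piHom_genMat n g) i) j
  rw [cst_transpose, cst_mul_apply, map_apply] at h
  simp only [map_apply, of_apply, Mop_eq, ← map_smul, ← map_sum]
  rw [← h]
  refine LinearMap.ext fun p => ?_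
  simp [conj_apply, piHom_piHom_inv]

/-! ### The derivations -/

def Dder (n : ℕ) (i j : Fin n) : Derivation ℂ (P n) (P n) :=
  if h : i < j then pderiv ⟨(i, j), h⟩
  else if h' : j < i then -pderiv ⟨(j, i), h'⟩
  else 0

lemma Dop_eq (n : ℕ) (i j : Fin n) : Dop n i j = (Dder n i j : P n →ₗ[ℂ] P n) := by
  unfold Dop Dder
  split_ifs <;> rfl

lemma Dder_X (n : ℕ) (i j : Fin n) (v : Idx n) : Dder n i j (X v) =
    C ((if i = v.1.1 ∧ j = v.1.2 then 1 else 0) - (if i = v.1.2 ∧ j = v.1.1 then 1 else 0)) := by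
  obtain ⟨⟨k, l⟩, hkl⟩ := v
  simp only at hkl
  unfold Dder
  split_ifs with h1 h2 h3 h4 h5 h6 h7 <;>
    simp [pderiv_X, Pi.single_apply, Subtype.ext_iff, Prod.ext_iff] <;> grind

lemma Dder_gen (n : ℕ) (i j k l : Fin n) : Dder n i j (genMat n k l) =
    C ((if i = k ∧ j = l then 1 else 0) - (if i = l ∧ j = k then 1 else 0)) := by
  have := ext_antisymm (A := P n) (Matrix.of fun k l => Dder n i j (genMat n k l))
    (Matrix.of fun k l =>
      C ((if i = k ∧ j = l then 1 else 0) - (if i = l ∧ j = k then 1 else 0))) ?_ ?_ ?_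
  · exact congrFun (congrFun this k) l
  · ext1 a b
    have := congrFun (congrFun (genMat_antisymm n) a) b
    simp only [transpose_apply, Matrix.neg_apply] at this
    simp [this]
  · ext1 a b
    simp
  · intro a b h
    have := genMat_lt (⟨(a, b), h⟩ : Idx n)
    simp only at this
    simp only [of_apply]
    rw [this, Dder_X]

def Eder (n : ℕ) (g : Matrix (Fin n) (Fin n) ℂ) (i j : Fin n) : Derivation ℂ (P n) (P n) :=
  ∑ k, ∑ l, (g k i * g l j) • Dder n k l

lemma Eder_apply (n : ℕ) (g : Matrix (Fin n) (Fin n) ℂ) (i j : Fin n) (p : P n) :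
    Eder n g i j p = ∑ k, ∑ l, (g k i * g l j) • Dder n k l p := by
  have hs : ∀ F : Fin n → Derivation ℂ (P n) (P n), (∑ k, F k) p = ∑ k, F k p := by
    intro F
    exact map_sum (⟨⟨fun d : Derivation ℂ (P n) (P n) => d p, rfl⟩, fun _ _ => rfl⟩ :
      Derivation ℂ (P n) (P n) →+ P n) F Finset.univ
  unfold Eder
  simp [hs]

lemma Eder_gen (n : ℕ) (g : Matrix (Fin n) (Fin n) ℂ) (i j a b : Fin n) :
    Eder n g i j (genMat n a b) = C (g a i * g b j - g b i * g a j) := by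
  rw [Eder_apply]
  simp only [Dder_gen, smul_eq_C_mul, ← map_mul, ← map_sum, mul_sub, Finset.sum_sub_distrib]
  congr 2 <;> simp [ite_and]

lemma Eder_pi (n : ℕ) (g : GL (Fin n) ℂ) (i j : Fin n) (v : Idx n) :
    Eder n g i j (piHom n g (X v)) = piHom n g (Dder n i j (X v)) := by
  have h := congrFun (congrFun (piHom_genMat n g) v.1.1) v.1.2
  rw [cst_transpose, cst_mul_apply, map_apply, genMat_lt] at h
  rw [h, Dder_X, ← algebraMap_eq, AlgHom.commutes]
  simp only [map_sum, Derivation.map_smul, Eder_gen]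
  simp only [smul_eq_C_mul, ← map_mul, algebraMap_eq]
  simp only [← map_sum]
  congr 1
  have e : ((g⁻¹ : GL (Fin n) ℂ) : Matrix (Fin n) (Fin n) ℂ) * g = 1 := by
    rw [← Units.val_mul]; simp
  have e' : ∀ a b, ∑ k, ((g⁻¹ : GL (Fin n) ℂ) : Matrix (Fin n) (Fin n) ℂ) a k *
      (g : Matrix (Fin n) (Fin n) ℂ) k b = if a = b then 1 else 0 := by
    intro a b
    rw [← mul_apply, e, one_apply]
  have e2 : ∀ a b c d, (if (a : Fin n) = b then (1 : ℂ) else 0) * (if (c : Fin n) = d then 1 else 0) =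
      if b = a ∧ d = c then 1 else 0 := by
    intro a b c d; split_ifs <;> grind
  have e3 : ∀ a b c d : Fin n, (if b = a ∧ d = c then (1 : ℂ) else 0) =
      ∑ k, ∑ l, (((g⁻¹ : GL (Fin n) ℂ) : Matrix (Fin n) (Fin n) ℂ) a k *
      (g : Matrix (Fin n) (Fin n) ℂ) k b) * (((g⁻¹ : GL (Fin n) ℂ) : Matrix (Fin n) (Fin n) ℂ) c l *
      (g : Matrix (Fin n) (Fin n) ℂ) l d) := by
    intro a b c d
    rw [← e2, ← e', ← e', Finset.sum_mul_sum]
  rw [e3, if_congr (and_comm (a := i = v.1.2)) rfl rfl, e3, ← Finset.sum_sub_distrib]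
  refine Finset.sum_congr rfl fun k _ => ?_
  rw [← Finset.sum_sub_distrib]
  refine Finset.sum_congr rfl fun l _ => ?_
  simp only [transpose_apply]
  ring

lemma Eder_comm (n : ℕ) (g : GL (Fin n) ℂ) (i j : Fin n) (p : P n) :
    Eder n g i j (piHom n g p) = piHom n g (Dder n i j p) := by
  induction p using MvPolynomial.induction_on with
  | C a =>
    rw [← algebraMap_eq, AlgHom.commutes]
    simp
  | add p q hp hq => simp [hp, hq]
  | mul_X p v hp =>
    rw [map_mul, Derivation.leibniz, Derivation.leibniz, hp, Eder_pi]
    simp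

lemma conj_D (n : ℕ) (g : GL (Fin n) ℂ) : (Dmat n).map (conj n g) =
    cst n _ (g : Matrix _ _ ℂ)ᵀ * Dmat n * cst n _ (g : Matrix _ _ ℂ) := by
  ext1 i j
  rw [cst_mul_apply]
  refine LinearMap.ext fun p => ?_
  have h := Eder_comm n g i j (piHom n g⁻¹ p)
  rw [piHom_piHom_inv, Eder_apply] at h
  simp only [map_apply, of_apply, Dop_eq, conj_apply]
  simpa using h.symm

/-! ### Assembling -/

lemma Jmat_cst (n : ℕ) (A : Type*) [Ring A] [Algebra ℂ A] : Jmat A n = cst n A (Jmat ℂ n) := by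
  ext1 i j
  simp [Jmat, apply_ite (algebraMap ℂ A)]

lemma Jmat_eq (n : ℕ) : Jmat ℂ n = (1 : Matrix (Fin n) (Fin n) ℂ).submatrix Fin.rev id := by
  ext i j
  simp only [Jmat, of_apply, submatrix_apply, one_apply, id, Fin.ext_iff, Fin.val_rev]
  congr 1
  simp only [eq_iff_iff]
  omega

lemma Jmat_sq (n : ℕ) : Jmat ℂ n * Jmat ℂ n = 1 := by
  ext i j
  rw [Jmat_eq, mul_apply]
  simp only [submatrix_apply, one_apply, id]
  rw [Finset.sum_eq_single i.rev]
  · simp [Fin.rev_rev]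
  · intro b _ hb
    simp [hb.symm]
  · simp

lemma Jmat_transpose (n : ℕ) : (Jmat ℂ n)ᵀ = Jmat ℂ n := by
  ext i j
  simp [Jmat, add_comm]

def hblk (n : ℕ) (g : GL (Fin n) ℂ) : Matrix (Fin n ⊕ Fin n) (Fin n ⊕ Fin n) ℂ :=
  Matrix.fromBlocks ((g⁻¹ : GL (Fin n) ℂ) : Matrix _ _ ℂ) 0 0
    (Jmat ℂ n * (g : Matrix _ _ ℂ)ᵀ * Jmat ℂ n)

lemma hblk_det (n : ℕ) (g : GL (Fin n) ℂ) : (hblk n g).det = 1 := by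
  have h1 : (Jmat ℂ n).det * (Jmat ℂ n).det = 1 := by rw [← det_mul, Jmat_sq, det_one]
  have h2 : ((g⁻¹ : GL (Fin n) ℂ) : Matrix (Fin n) (Fin n) ℂ).det *
      (g : Matrix (Fin n) (Fin n) ℂ).det = 1 := by
    rw [← det_mul, ← Units.val_mul]; simp
  rw [hblk, det_fromBlocks_zero₂₁, det_mul, det_mul, det_transpose]
  linear_combination h2 + h1 * ((g⁻¹ : GL (Fin n) ℂ) : Matrix (Fin n) (Fin n) ℂ).det *
      (g : Matrix (Fin n) (Fin n) ℂ).det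

abbrev PhiBlk (n : ℕ) (u : ℂ) : Matrix (Fin n ⊕ Fin n) (Fin n ⊕ Fin n) (Module.End ℂ (P n)) :=
    (Matrix.fromBlocks (Mmat n) (u • Jmat (Module.End ℂ (P n)) n)
      (-(u • Jmat (Module.End ℂ (P n)) n))
      (-(Jmat (Module.End ℂ (P n)) n * (Dmat n) * Jmat (Module.End ℂ (P n)) n)))

lemma conj_cst (n : ℕ) (g : GL (Fin n) ℂ) (a : Matrix (Fin n) (Fin n) ℂ) :
    (cst n (Module.End ℂ (P n)) a).map (conj n g) = cst n _ a := by
  ext1 i j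
  simp only [RingHom.mapMatrix_apply, map_apply]
  exact (conj n g).commutes _

lemma map_mul_conj (n : ℕ) (g : GL (Fin n) ℂ) (a b : Matrix (Fin n) (Fin n) (Module.End ℂ (P n))) :
    (a * b).map (conj n g) = a.map (conj n g) * b.map (conj n g) :=
  map_mul (((conj n g).toRingEquiv.toRingHom).mapMatrix) a b

lemma conj_PhiBlk (n : ℕ) (g : GL (Fin n) ℂ) (u : ℂ) :
    (PhiBlk n u).map (conj n g) =
      (hblk n g).map (algebraMap ℂ _) * PhiBlk n u * (hblk n g)ᵀ.map (algebraMap ℂ _) := by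
  have e1 : ((g⁻¹ : GL (Fin n) ℂ) : Matrix (Fin n) (Fin n) ℂ) * g = 1 := by
    rw [← Units.val_mul]; simp
  have e2 : (g : Matrix (Fin n) (Fin n) ℂ)ᵀ * ((g⁻¹ : GL (Fin n) ℂ) : Matrix (Fin n) (Fin n) ℂ)ᵀ = 1 := by
    rw [← transpose_mul, e1, transpose_one]
  have hm : ∀ a : Matrix (Fin n) (Fin n) ℂ,
    a.map (algebraMap ℂ (Module.End ℂ (P n))) = cst n _ a := fun _ => rfl
  have h0 : (0 : Matrix (Fin n) (Fin n) ℂ).map (algebraMap ℂ (Module.End ℂ (P n))) = 0 := by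
    rw [hm, map_zero]
  have hu : (u • cst n (Module.End ℂ (P n)) (Jmat ℂ n)) = cst n _ (u • Jmat ℂ n) := by
    ext1 i j
    simp only [Matrix.smul_apply, RingHom.mapMatrix_apply, map_apply, smul_eq_mul, map_mul]
    rw [Algebra.smul_def]
  have hneg : ∀ a : Matrix (Fin n) (Fin n) (Module.End ℂ (P n)),
      (-a).map (conj n g) = -(a.map (conj n g)) := by
    intro a; ext1; simp
  rw [hblk, fromBlocks_transpose, fromBlocks_map, fromBlocks_map, fromBlocks_map,
    fromBlocks_multiply, fromBlocks_multiply]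
  simp only [transpose_zero, h0, hm, Matrix.zero_mul, Matrix.mul_zero, add_zero, zero_add]
  rw [conj_M, hneg, hneg, map_mul_conj, map_mul_conj, conj_D, Jmat_cst, hu, conj_cst, conj_cst]
  have eJ : ∀ x : Matrix (Fin n) (Fin n) ℂ, Jmat ℂ n * (Jmat ℂ n * x) = x := by
    intro x; rw [← mul_assoc, Jmat_sq, one_mul]
  have eJ' : ∀ x : Matrix (Fin n) (Fin n) (Module.End ℂ (P n)),
      cst n _ (Jmat ℂ n) * (cst n _ (Jmat ℂ n) * x) = x := by
    intro x; rw [← mul_assoc, ← map_mul, Jmat_sq, map_one, one_mul]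
  have e1' : ∀ x : Matrix (Fin n) (Fin n) ℂ,
      ((g⁻¹ : GL (Fin n) ℂ) : Matrix (Fin n) (Fin n) ℂ) * (g * x) = x := by
    intro x; rw [← mul_assoc, e1, one_mul]
  congr 1
  · rw [← map_mul, ← map_mul]
    simp only [transpose_mul, transpose_transpose, Jmat_transpose, smul_mul_assoc, mul_smul_comm,
      mul_assoc, eJ, e1']
  · rw [Matrix.mul_neg, Matrix.neg_mul, ← map_mul, ← map_mul]
    simp only [smul_mul_assoc, mul_smul_comm, mul_assoc, eJ, e2, mul_one]
  · rw [Matrix.mul_neg, Matrix.neg_mul]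
    simp only [transpose_mul, transpose_transpose, Jmat_transpose, map_mul, mul_assoc, eJ']

lemma conj_PhiTilde (n : ℕ) (g : GL (Fin n) ℂ) (u : ℂ) (a b : Fin (2 * n)) :
    conj n g (PhiTilde n u a b) = ∑ p : Fin (2 * n) × Fin (2 * n),
      ((Matrix.reindex (sumEquiv n) (sumEquiv n) (hblk n g)) a p.1 *
      (Matrix.reindex (sumEquiv n) (sumEquiv n) (hblk n g)) b p.2) • PhiTilde n u p.1 p.2 := by
  have h := congrFun (congrFun (conj_PhiBlk n g u) ((sumEquiv n).symm a)) ((sumEquiv n).symm b)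
  rw [map_apply] at h
  have hP : ∀ c d, PhiTilde n u c d = PhiBlk n u ((sumEquiv n).symm c) ((sumEquiv n).symm d) :=
    fun _ _ => rfl
  simp only [hP, reindex_apply, submatrix_apply]
  rw [h, Fintype.sum_prod_type]
  rw [(sumEquiv n).symm.sum_comp (fun k => ∑ y, (hblk n g ((sumEquiv n).symm a) k *
    hblk n g ((sumEquiv n).symm b) ((sumEquiv n).symm y)) • PhiBlk n u k ((sumEquiv n).symm y))]
  simp only [mul_apply (M := _ * _)]
  simp only [mul_apply, Finset.sum_mul]
  rw [Finset.sum_comm]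
  refine Finset.sum_congr rfl fun k _ => ?_
  rw [(sumEquiv n).symm.sum_comp (fun y => (hblk n g ((sumEquiv n).symm a) k *
    hblk n g ((sumEquiv n).symm b) y) • PhiBlk n u k y)]
  refine Finset.sum_congr rfl fun l _ => ?_
  simp only [map_apply, transpose_apply]
  rw [← Algebra.commutes, ← mul_assoc, ← map_mul, ← Algebra.smul_def, mul_comm]

lemma map_Pf {A : Type*} [Ring A] [Algebra ℂ A] {m : ℕ} (φ : A ≃ₐ[ℂ] A)
    (B : Matrix (Fin (2 * m)) (Fin (2 * m)) A) : φ (Pf B) = Pf (B.map φ) := by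
  unfold Pf
  rw [map_smul, map_sum]
  congr 1
  refine Finset.sum_congr rfl fun σ _ => ?_
  rw [map_zsmul, map_list_prod, List.map_ofFn]
  rfl

/-- `Pf(Φ̃(u))` is `GL_n`-invariant: `π(g) ∘ Pf(Φ̃(u)) ∘ π(g)⁻¹ = Pf(Φ̃(u))`. -/
theorem Pf_PhiTilde_invariant (n : ℕ) (hn : 1 ≤ n) (g : GL (Fin n) ℂ) (u : ℂ) :
    (piHom n g).toLinearMap ∘ₗ Pf (PhiTilde n u) ∘ₗ (piHom n g⁻¹).toLinearMap =
      Pf (PhiTilde n u) := by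
  rw [← conj_apply, map_Pf, Pf_congr (PhiTilde n u) ((PhiTilde n u).map (conj n g))
    (Matrix.reindex (sumEquiv n) (sumEquiv n) (hblk n g)) (fun a b => conj_PhiTilde n g u a b),
    det_reindex_self, hblk_det, one_smul]

end
end

section
/- For all nonnegative integers a and b, one has Θ₊^a Θ₋^b = Σ_{k=0}^{min(a,b)} ( (a)_k (b)_k / k! ) (2τ²)^k Θ₋^{b−k} Θ₊^{a−k} in ⋀V ⊗ End(P), where (z)_k := z(z−1)⋯(z−k+1) denotes the descending factorial. -/
open Matrix MvPolynomial TensorProduct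

noncomputable section

/-- `2n`-dimensional vector space with basis indexed by `Fin n ⊕ Fin n`
(`Sum.inl i ↦ e_{i+1}`, `Sum.inr i ↦ e_{-(i+1)}`). -/
abbrev V (n : ℕ) := (Fin n ⊕ Fin n) → ℂ

/-- The tensor product algebra `⋀V ⊗ End(P)`. -/
abbrev ExtEnd (n : ℕ) := ExteriorAlgebra ℂ (V n) ⊗[ℂ] Module.End ℂ (P n)

/-- The basis vectors `e_i` in the exterior algebra. -/
def e (n : ℕ) (v : Fin n ⊕ Fin n) : ExteriorAlgebra ℂ (V n) :=
  ExteriorAlgebra.ι ℂ (Pi.single v 1)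

/-- `τ = Σ_i e_i e_{−i} ⊗ 1`. -/
def tau (n : ℕ) : ExtEnd n := ∑ i : Fin n, (e n (.inl i) * e n (.inr i)) ⊗ₜ[ℂ] 1

/-- `Θ₋ = Σ_{i,j} e_i e_j ⊗ M_{i,j}`. -/
def ThetaMinus (n : ℕ) : ExtEnd n :=
  ∑ i : Fin n, ∑ j : Fin n, (e n (.inl i) * e n (.inl j)) ⊗ₜ[ℂ] Mop n i j

/-- `Θ₊ = Σ_{i,j} e_{−j} e_{−i} ⊗ D_{i,j}`. -/
def ThetaPlus (n : ℕ) : ExtEnd n :=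
  ∑ i : Fin n, ∑ j : Fin n, (e n (.inr j) * e n (.inr i)) ⊗ₜ[ℂ] Dop n i j

/-- Descending factorial `(a)_k = a(a−1)⋯(a−k+1)` as a complex number. -/
def dfac (a k : ℕ) : ℂ := ∏ t ∈ Finset.range k, ((a : ℂ) - t)

theorem aux_xy {A : Type*} [Semiring A] (x y c : A) (h : x * y = y * x + c)
    (hcy : c * y = y * c) (b : ℕ) :
    x * y ^ b = y ^ b * x + (b : A) * (c * y ^ (b - 1)) := by
  induction b with
  | zero => simp
  | succ b ih =>
    have hc : Commute c (y ^ b) := (show Commute c y from hcy).pow_right b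
    rw [pow_succ, ← mul_assoc, ih, add_mul, mul_assoc (y ^ b), h, mul_add, ← hc.eq]
    rcases b with _ | b
    · simp
    · simp only [Nat.add_sub_cancel, mul_assoc, ← pow_succ]
      rw [Nat.cast_succ (b + 1), add_mul, one_mul, pow_succ y (b + 1), mul_assoc (y ^ (b + 1))]
      abel

theorem aux_nat {A : Type*} [Semiring A] (x y c : A) (h : x * y = y * x + c)
    (hcy : c * y = y * c) (hcx : c * x = x * c) (a b : ℕ) :
    x ^ a * y ^ b = ∑ k ∈ Finset.range (a + 1),
      (a.choose k * b.descFactorial k) • (c ^ k * y ^ (b - k) * x ^ (a - k)) := by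
  induction a with
  | zero => simp
  | succ a ih =>
    have key : ∀ k ∈ Finset.range (a + 1),
        x * ((a.choose k * b.descFactorial k) • (c ^ k * y ^ (b - k) * x ^ (a - k))) =
        (a.choose k * b.descFactorial k) • (c ^ k * y ^ (b - k) * x ^ (a + 1 - k)) +
        (a.choose k * b.descFactorial (k + 1)) •
          (c ^ (k + 1) * y ^ (b - (k + 1)) * x ^ (a + 1 - (k + 1))) := by
      intro k hk
      have hk' : k ≤ a := Nat.lt_succ_iff.mp (Finset.mem_range.mp hk)
      have hc : Commute (c ^ k) x := (show Commute c x from hcx).pow_left k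
      have e1 : x * (c ^ k * y ^ (b - k) * x ^ (a - k)) =
          c ^ k * (x * y ^ (b - k)) * x ^ (a - k) := by
        simp only [← mul_assoc, hc.eq]
      rw [mul_smul_comm, e1, aux_xy x y c h hcy, Nat.sub_sub, Nat.add_sub_add_right,
        Nat.succ_sub hk', Nat.descFactorial_succ, mul_add, add_mul, smul_add]
      congr 1
      · simp only [pow_succ', mul_assoc]
      · rw [← nsmul_eq_mul, mul_smul_comm, smul_mul_assoc, smul_smul]
        simp only [pow_succ, mul_assoc]
        congr 1
        ring
    rw [pow_succ', mul_assoc, ih, Finset.mul_sum, Finset.sum_congr rfl key,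
      Finset.sum_add_distrib, Finset.sum_range_succ' _ (a + 1)]
    simp only [Nat.choose_succ_succ, add_mul, add_smul, Finset.sum_add_distrib]
    rw [Finset.sum_range_succ' _ a, Finset.sum_range_succ
      (fun k => (a.choose (k+1) * b.descFactorial (k + 1)) •
          (c ^ (k + 1) * y ^ (b - (k + 1)) * x ^ (a + 1 - (k + 1)))) a]
    simp
    abel

theorem aux_dfac (a k : ℕ) : dfac a k = (a.descFactorial k : ℂ) := by
  induction k with
  | zero => simp [dfac]
  | succ k ih =>
    have : dfac a (k + 1) = dfac a k * ((a : ℂ) - k) := by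
      simp [dfac, Finset.prod_range_succ]
    rw [this, ih, Nat.descFactorial_succ]
    rcases le_or_gt k a with h | h
    · push_cast [h]; ring
    · simp [Nat.descFactorial_eq_zero_iff_lt.2 h]

theorem e_anti (n : ℕ) (u v : Fin n ⊕ Fin n) : e n u * e n v = - (e n v * e n u) :=
  eq_neg_of_add_eq_zero_left (ExteriorAlgebra.ι_add_mul_swap _ _)

theorem ee_comm (n : ℕ) (u v : Fin n ⊕ Fin n) (w : Fin n ⊕ Fin n) :
    (e n u * e n v) * e n w = e n w * (e n u * e n v) := by
  rw [mul_assoc, e_anti n v w, mul_neg, ← mul_assoc, e_anti n u w]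
  simp [mul_assoc]

theorem ee_comm2 (n : ℕ) (u v w z : Fin n ⊕ Fin n) :
    (e n u * e n v) * (e n w * e n z) = (e n w * e n z) * (e n u * e n v) := by
  rw [← mul_assoc, ee_comm, mul_assoc, ee_comm, mul_assoc]

theorem DM_comm (n : ℕ) (i j k l : Fin n) :
    Dop n i j * Mop n k l = Mop n k l * Dop n i j +
      ((if i = k ∧ j = l then (1:ℂ) else 0) • 1 + (if i = l ∧ j = k then (-1 : ℂ) else 0) • 1) := by
  apply LinearMap.ext
  intro p
  unfold Dop Mop
  have hk : i = k ∧ j = l ↔ k = i ∧ l = j := by grind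
  have hl : i = l ∧ j = k ↔ l = i ∧ k = j := by grind
  rcases lt_trichotomy i j with h | h | h <;> rcases lt_trichotomy k l with h' | h' | h' <;>
  · have h1 : ¬ (j < i) ∨ ¬ (i < j) := by grind
    simp [h, h', h.not_gt, h'.not_gt, Derivation.leibniz, pderiv_X, Pi.single_apply,
      Subtype.ext_iff, Prod.ext_iff]
    try split_ifs
    all_goals first | grind | (simp; done) | (simp; grind)

theorem tau_comm (n : ℕ) (u v : Fin n ⊕ Fin n) (X : Module.End ℂ (P n)) :
    tau n * ((e n u * e n v) ⊗ₜ[ℂ] X) = ((e n u * e n v) ⊗ₜ[ℂ] X) * tau n := by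
  simp only [tau, Finset.sum_mul, Finset.mul_sum, Algebra.TensorProduct.tmul_mul_tmul,
    one_mul, mul_one]
  exact Finset.sum_congr rfl fun i _ => by rw [ee_comm2]

theorem tau_plus (n : ℕ) : Commute (tau n) (ThetaPlus n) :=
  Commute.sum_right _ _ _ fun _ _ => Commute.sum_right _ _ _ fun _ _ => tau_comm _ _ _ _

theorem tau_minus (n : ℕ) : Commute (tau n) (ThetaMinus n) :=
  Commute.sum_right _ _ _ fun _ _ => Commute.sum_right _ _ _ fun _ _ => tau_comm _ _ _ _

theorem four1 (n : ℕ) (i j : Fin n) :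
    (e n (.inr j) * e n (.inr i)) * (e n (.inl i) * e n (.inl j)) =
      (e n (.inl i) * e n (.inr i)) * (e n (.inl j) * e n (.inr j)) := by
  have h : (e n (.inr j) * e n (.inr i)) * (e n (.inl i) * e n (.inl j)) =
      e n (.inr j) * ((e n (.inr i) * e n (.inl i)) * e n (.inl j)) := by
    simp only [mul_assoc]
  rw [h, ee_comm, ← mul_assoc, e_anti n (.inr j), e_anti n (.inr i), neg_mul_neg, ee_comm2]

theorem four2 (n : ℕ) (i j : Fin n) :
    (e n (.inr j) * e n (.inr i)) * (e n (.inl j) * e n (.inl i)) =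
      (-1 : ℂ) • ((e n (.inl i) * e n (.inr i)) * (e n (.inl j) * e n (.inr j))) := by
  rw [e_anti n (.inl j), mul_neg, four1, neg_one_smul]

theorem plus_minus (n : ℕ) :
    ThetaPlus n * ThetaMinus n = ThetaMinus n * ThetaPlus n + 2 * tau n ^ 2 := by
  have h1 : ThetaPlus n * ThetaMinus n = ∑ i, ∑ j, ∑ k, ∑ l,
      ((e n (.inr j) * e n (.inr i)) * (e n (.inl k) * e n (.inl l))) ⊗ₜ[ℂ]
        (Dop n i j * Mop n k l) := by
    unfold ThetaMinus ThetaPlus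
    rw [Finset.sum_mul]
    refine Finset.sum_congr rfl fun i _ => ?_
    rw [Finset.sum_mul]
    refine Finset.sum_congr rfl fun j _ => ?_
    rw [Finset.mul_sum]
    refine Finset.sum_congr rfl fun k _ => ?_
    rw [Finset.mul_sum]
    refine Finset.sum_congr rfl fun l _ => ?_
    rw [Algebra.TensorProduct.tmul_mul_tmul]
  have h2 : ThetaMinus n * ThetaPlus n = ∑ i, ∑ j, ∑ k, ∑ l,
      ((e n (.inr j) * e n (.inr i)) * (e n (.inl k) * e n (.inl l))) ⊗ₜ[ℂ]
        (Mop n k l * Dop n i j) := by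
    unfold ThetaMinus ThetaPlus
    rw [Finset.mul_sum]
    refine Finset.sum_congr rfl fun i _ => ?_
    rw [Finset.mul_sum]
    refine Finset.sum_congr rfl fun j _ => ?_
    rw [Finset.sum_mul]
    refine Finset.sum_congr rfl fun k _ => ?_
    rw [Finset.sum_mul]
    refine Finset.sum_congr rfl fun l _ => ?_
    rw [Algebra.TensorProduct.tmul_mul_tmul, ee_comm2]
  have h3 : tau n ^ 2 = ∑ i, ∑ j,
      ((e n (.inl i) * e n (.inr i)) * (e n (.inl j) * e n (.inr j))) ⊗ₜ[ℂ] 1 := by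
    simp only [tau, pow_two, Finset.sum_mul_sum, Algebra.TensorProduct.tmul_mul_tmul, mul_one]
  rw [h1, h2, h3]
  simp only [DM_comm, tmul_add, Finset.sum_add_distrib]
  congr 1
  rw [← Finset.sum_add_distrib, Finset.mul_sum]
  refine Finset.sum_congr rfl fun i _ => ?_
  rw [← Finset.sum_add_distrib, Finset.mul_sum]
  refine Finset.sum_congr rfl fun j _ => ?_
  simp only [tmul_smul]
  simp only [ite_smul, one_smul, zero_smul,
    ite_and]
  have a1 : ∀ f : Fin n → Fin n → ExtEnd n,
      (∑ k, ∑ l, if i = k then if j = l then f k l else 0 else 0) = f i j := by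
    intro f
    rw [Finset.sum_eq_single i] <;> simp +contextual [eq_comm]
  have a2 : ∀ f : Fin n → Fin n → ExtEnd n,
      (∑ k, ∑ l, if i = l then if j = k then f k l else 0 else 0) = f j i := by
    intro f
    rw [Finset.sum_eq_single j] <;> simp +contextual [eq_comm]
  rw [a1, a2, four1, four2, ← smul_tmul', smul_smul, two_mul]
  norm_num

/-- `Θ₊^a Θ₋^b = Σ_{k=0}^{min(a,b)} ((a)_k (b)_k / k!) (2τ²)^k Θ₋^{b−k} Θ₊^{a−k}`. -/
theorem ThetaPlus_pow_mul_ThetaMinus_pow (n : ℕ) (hn : 1 ≤ n) (a b : ℕ) :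
    ThetaPlus n ^ a * ThetaMinus n ^ b =
      ∑ k ∈ Finset.range (min a b + 1),
        ((dfac a k * dfac b k) / (k.factorial : ℂ)) •
          ((2 * tau n ^ 2) ^ k * ThetaMinus n ^ (b - k) * ThetaPlus n ^ (a - k)) := by
  have cy : Commute (2 * tau n ^ 2) (ThetaMinus n) :=
    (Commute.ofNat_left 2 _).mul_left ((tau_minus n).pow_left 2)
  have cx : Commute (2 * tau n ^ 2) (ThetaPlus n) :=
    (Commute.ofNat_left 2 _).mul_left ((tau_plus n).pow_left 2)
  rw [aux_nat _ _ _ (plus_minus n) cy.eq cx.eq]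
  symm
  have hsub : Finset.range (min a b + 1) ⊆ Finset.range (a + 1) := by
    intro k hk
    simp only [Finset.mem_range] at hk ⊢
    omega
  rw [← Finset.sum_subset hsub]
  · refine Finset.sum_congr rfl fun k _ => ?_
    rw [← Nat.cast_smul_eq_nsmul ℂ, aux_dfac, aux_dfac]
    congr 1
    rw [Nat.descFactorial_eq_factorial_mul_choose a k]
    have : (k.factorial : ℂ) ≠ 0 := by exact_mod_cast k.factorial_ne_zero
    push_cast
    field_simp
  · intro k hk hk'
    simp only [Finset.mem_range] at hk hk'
    have : b.descFactorial k = 0 := Nat.descFactorial_eq_zero_iff_lt.2 (by omega)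
    rw [this, mul_zero, zero_smul]

end
end
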